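/- Let R > 0 and 3R/2 ≤ s < t ≤ 2R, let v : ℝ³ → ℝ³ be a smooth vector field and θ : ℝ³ → ℝ a smooth function, and set J₆ = (1/(t−s)) ∫_{B_t ∖ B_s} |v||θ| dx. Let q ∈ [1, 2) and r ∈ [1, 2). Then for every δ > 0 and σ > 0 there exists a constant C_{δ,σ} > 0, depending only on q, r, δ, σ (and not on v, θ, R, s, t), such that J₆ ≤ δ‖v‖²_{L⁶(B_t ∖ B_R)} + σ‖θ‖²_{L⁶(B_t ∖ B_R)} + C_{δ,σ} (t−s)^{−(6−q)(6−r)/(q(6−r)+r(6−q))} ‖v‖_{L^q(B_{2R} ∖ B_R)}^{2q(6−r)/(q(6−r)+r(6−q))} ‖θ‖_{L^r(B_{2R} ∖ B_R)}^{2r(6−q)/(q(6−r)+r(6−q))}. -/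

import Mathlib

open MeasureTheory Filter Metric

noncomputable section

/-- `L^p` norm of a scalar function on a set `E ⊆ ℝ³`. -/
def lpS (g : EuclideanSpace ℝ (Fin 3) → ℝ) (p : ℝ) (E : Set (EuclideanSpace ℝ (Fin 3))) : ℝ :=
  (∫ x in E, |g x| ^ p) ^ (1 / p)


lemma J6_memLp (f : EuclideanSpace ℝ (Fin 3) → ℝ) (hf : Continuous f)
    (E : Set (EuclideanSpace ℝ (Fin 3))) (hE : Bornology.IsBounded E)
    (hm : MeasurableSet E) (p : ENNReal) :
    MemLp f p (volume.restrict E) := by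
  obtain ⟨M, hM⟩ := (hE.isCompact_closure).exists_bound_of_continuousOn hf.continuousOn
  haveI : IsFiniteMeasure (volume.restrict E) := ⟨by
    rw [Measure.restrict_apply_univ]; exact hE.measure_lt_top⟩
  refine MemLp.of_bound hf.aestronglyMeasurable M ?_
  filter_upwards [ae_restrict_mem hm] with x hx
  exact hM x (subset_closure hx)

lemma J6_integrable (f : EuclideanSpace ℝ (Fin 3) → ℝ) (hf : Continuous f)
    (E : Set (EuclideanSpace ℝ (Fin 3))) (hE : Bornology.IsBounded E)
    (hm : MeasurableSet E) : IntegrableOn f E :=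
  memLp_one_iff_integrable.1 (J6_memLp f hf E hE hm 1)

lemma J6_holder (f g : EuclideanSpace ℝ (Fin 3) → ℝ) (hf : Continuous f) (hg : Continuous g)
    (hf0 : ∀ x, 0 ≤ f x) (hg0 : ∀ x, 0 ≤ g x)
    (E : Set (EuclideanSpace ℝ (Fin 3))) (hE : Bornology.IsBounded E)
    (hm : MeasurableSet E) (a b : ℝ) (ha : 0 < a) (hb : 0 < b) (hab : a + b = 1) :
    ∫ x in E, f x ^ a * g x ^ b ≤ (∫ x in E, f x) ^ a * (∫ x in E, g x) ^ b := by
  have hc : (1 / a).HolderConjugate (1 / b) := by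
    rw [Real.holderConjugate_iff]
    refine ⟨by rw [lt_div_iff₀ ha]; linarith, by simpa using hab⟩
  have h := integral_mul_le_Lp_mul_Lq_of_nonneg (μ := volume.restrict E) hc
    (f := fun x => f x ^ a) (g := fun x => g x ^ b)
    (Eventually.of_forall fun x => Real.rpow_nonneg (hf0 x) _)
    (Eventually.of_forall fun x => Real.rpow_nonneg (hg0 x) _)
    (J6_memLp _ (hf.rpow_const fun x => Or.inr ha.le) E hE hm _)
    (J6_memLp _ (hg.rpow_const fun x => Or.inr hb.le) E hE hm _)
  have e1 : ∀ x, (f x ^ a) ^ (1 / a) = f x := fun x => by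
    rw [← Real.rpow_mul (hf0 x), mul_one_div_cancel ha.ne', Real.rpow_one]
  have e2 : ∀ x, (g x ^ b) ^ (1 / b) = g x := fun x => by
    rw [← Real.rpow_mul (hg0 x), mul_one_div_cancel hb.ne', Real.rpow_one]
  simpa only [e1, e2, one_div_one_div] using h

lemma J6_lpS_nonneg (g : EuclideanSpace ℝ (Fin 3) → ℝ) (p : ℝ)
    (E : Set (EuclideanSpace ℝ (Fin 3))) : 0 ≤ lpS g p E :=
  Real.rpow_nonneg (integral_nonneg fun x => Real.rpow_nonneg (abs_nonneg _) _) _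

lemma J6_interp (f : EuclideanSpace ℝ (Fin 3) → ℝ) (hf : Continuous f)
    (A E F : Set (EuclideanSpace ℝ (Fin 3))) (hE : Bornology.IsBounded E)
    (hF : Bornology.IsBounded F) (hAE : A ⊆ E) (hAF : A ⊆ F)
    (hmA : MeasurableSet A) (hmE : MeasurableSet E) (hmF : MeasurableSet F)
    (q : ℝ) (hq1 : 1 ≤ q) (hq2 : q < 2) :
    (∫ x in A, |f x| ^ (2 : ℝ)) ^ (1 / 2 : ℝ) ≤
      lpS f q E ^ (2 * q / (6 - q)) * lpS f 6 F ^ (1 - 2 * q / (6 - q)) := by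
  have h6 : 0 < 6 - q := by linarith
  have cq : Continuous fun x => |f x| ^ q := hf.abs.rpow_const fun x => Or.inr (by linarith)
  have c6 : Continuous fun x => |f x| ^ (6 : ℝ) :=
    hf.abs.rpow_const fun x => Or.inr (by norm_num)
  have n : ∀ (p : ℝ) (S : Set (EuclideanSpace ℝ (Fin 3))), 0 ≤ ∫ x in S, |f x| ^ p :=
    fun p S => integral_nonneg fun x => Real.rpow_nonneg (abs_nonneg _) _
  have hα : 0 < 4 / (6 - q) := by positivity
  have hβ : 0 < (2 - q) / (6 - q) := div_pos (by linarith) h6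
  have h := J6_holder _ _ cq c6 (fun x => Real.rpow_nonneg (abs_nonneg _) _)
    (fun x => Real.rpow_nonneg (abs_nonneg _) _) A (hE.subset hAE) hmA
    (4 / (6 - q)) ((2 - q) / (6 - q)) hα hβ (by field_simp; ring)
  have e : ∀ x, (|f x| ^ q) ^ (4 / (6 - q)) * (|f x| ^ (6 : ℝ)) ^ ((2 - q) / (6 - q))
      = |f x| ^ (2 : ℝ) := fun x => by
    rw [← Real.rpow_mul (abs_nonneg _), ← Real.rpow_mul (abs_nonneg _),
      ← Real.rpow_add_of_nonneg (abs_nonneg _) (by positivity) (by positivity)]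
    congr 1
    field_simp
    ring
  simp only [e] at h
  have m1 : ∫ x in A, |f x| ^ q ≤ ∫ x in E, |f x| ^ q :=
    setIntegral_mono_set (J6_integrable _ cq E hE hmE)
      (Eventually.of_forall fun x => Real.rpow_nonneg (abs_nonneg _) _) hAE.eventuallyLE
  have m2 : ∫ x in A, |f x| ^ (6 : ℝ) ≤ ∫ x in F, |f x| ^ (6 : ℝ) :=
    setIntegral_mono_set (J6_integrable _ c6 F hF hmF)
      (Eventually.of_forall fun x => Real.rpow_nonneg (abs_nonneg _) _) hAF.eventuallyLE
  have h2 : ∫ x in A, |f x| ^ (2 : ℝ) ≤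
      (∫ x in E, |f x| ^ q) ^ (4 / (6 - q)) *
        (∫ x in F, |f x| ^ (6 : ℝ)) ^ ((2 - q) / (6 - q)) :=
    h.trans (mul_le_mul (Real.rpow_le_rpow (n _ _) m1 hα.le)
      (Real.rpow_le_rpow (n _ _) m2 hβ.le) (Real.rpow_nonneg (n _ _) _)
      (Real.rpow_nonneg (n _ _) _))
  refine (Real.rpow_le_rpow (n _ _) h2 (by norm_num)).trans_eq ?_
  unfold lpS
  rw [Real.mul_rpow (Real.rpow_nonneg (n _ _) _) (Real.rpow_nonneg (n _ _) _),
    ← Real.rpow_mul (n _ _), ← Real.rpow_mul (n _ _), ← Real.rpow_mul (n _ _),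
    ← Real.rpow_mul (n _ _)]
  congr 2
  · field_simp
    norm_num
  · field_simp
    ring

lemma J6_young (a b δ σ : ℝ) (ha : 0 < a) (ha1 : a < 1) (hb : 0 < b) (hb1 : b < 1)
    (hδ : 0 < δ) (hσ : 0 < σ) (d V V6 T T6 : ℝ) (hd : 0 < d) (hV : 0 ≤ V) (hV6 : 0 ≤ V6)
    (hT : 0 ≤ T) (hT6 : 0 ≤ T6) :
    1 / d * ((V ^ a * V6 ^ (1 - a)) * (T ^ b * T6 ^ (1 - b))) ≤
      δ * V6 ^ 2 + σ * T6 ^ 2 +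
      (δ ^ (-((1 - a) / 2)) * σ ^ (-((1 - b) / 2))) ^ (2 / (a + b)) *
        d ^ (-(2 / (a + b))) * V ^ (2 * a / (a + b)) * T ^ (2 * b / (a + b)) := by
  have hab : 0 < a + b := by linarith
  set K := δ ^ (-((1 - a) / 2)) * σ ^ (-((1 - b) / 2)) with hK
  have hK0 : 0 < K := by positivity
  set P := K ^ (2 / (a + b)) *
        d ^ (-(2 / (a + b))) * V ^ (2 * a / (a + b)) * T ^ (2 * b / (a + b)) with hP
  have hP0 : 0 ≤ P := by positivity
  have h := Real.geom_mean_le_arith_mean3_weighted (w₁ := (1 - a) / 2) (w₂ := (1 - b) / 2)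
    (w₃ := (a + b) / 2) (p₁ := δ * V6 ^ 2) (p₂ := σ * T6 ^ 2) (p₃ := P)
    (by linarith) (by linarith) (by linarith) (by positivity) (by positivity) hP0 (by ring)
  have e1 : (δ * V6 ^ 2) ^ ((1 - a) / 2) = δ ^ ((1 - a) / 2) * V6 ^ (1 - a) := by
    rw [Real.mul_rpow hδ.le (by positivity), ← Real.rpow_natCast V6 2, ← Real.rpow_mul hV6]
    congr 2
    push_cast
    ring
  have e2 : (σ * T6 ^ 2) ^ ((1 - b) / 2) = σ ^ ((1 - b) / 2) * T6 ^ (1 - b) := by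
    rw [Real.mul_rpow hσ.le (by positivity), ← Real.rpow_natCast T6 2, ← Real.rpow_mul hT6]
    congr 2
    push_cast
    ring
  have e3 : P ^ ((a + b) / 2) = K * d⁻¹ * V ^ a * T ^ b := by
    rw [hP, Real.mul_rpow (by positivity) (by positivity),
      Real.mul_rpow (by positivity) (by positivity),
      Real.mul_rpow (by positivity) (by positivity),
      ← Real.rpow_mul hK0.le, ← Real.rpow_mul hd.le, ← Real.rpow_mul hV, ← Real.rpow_mul hT,
      ← Real.rpow_neg_one d]
    have x1 : 2 / (a + b) * ((a + b) / 2) = 1 := by field_simp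
    have x2 : -(2 / (a + b)) * ((a + b) / 2) = -1 := by field_simp
    have x3 : 2 * a / (a + b) * ((a + b) / 2) = a := by field_simp
    have x4 : 2 * b / (a + b) * ((a + b) / 2) = b := by field_simp
    rw [x1, x2, x3, x4, Real.rpow_one]
  rw [e1, e2, e3, hK, Real.rpow_neg hδ.le, Real.rpow_neg hσ.le] at h
  have d1 : δ ^ ((1 - a) / 2) ≠ 0 := by positivity
  have d2 : σ ^ ((1 - b) / 2) ≠ 0 := by positivity
  have e : 1 / d * ((V ^ a * V6 ^ (1 - a)) * (T ^ b * T6 ^ (1 - b))) =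
    δ ^ ((1 - a) / 2) * V6 ^ (1 - a) * (σ ^ ((1 - b) / 2) * T6 ^ (1 - b)) *
      ((δ ^ ((1 - a) / 2))⁻¹ * (σ ^ ((1 - b) / 2))⁻¹ * d⁻¹ * V ^ a * T ^ b) := by
    generalize δ ^ ((1 - a) / 2) = x at *
    generalize σ ^ ((1 - b) / 2) = y at *
    field_simp
  rw [e]
  refine h.trans ?_
  have i1 : (1 - a) / 2 * (δ * V6 ^ 2) ≤ δ * V6 ^ 2 :=
    mul_le_of_le_one_left (by positivity) (by linarith)
  have i2 : (1 - b) / 2 * (σ * T6 ^ 2) ≤ σ * T6 ^ 2 :=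
    mul_le_of_le_one_left (by positivity) (by linarith)
  have i3 : (a + b) / 2 * P ≤ P := mul_le_of_le_one_left hP0 (by linarith)
  linarith

theorem J6_estimate_i (q r : ℝ) (hq1 : 1 ≤ q) (hq2 : q < 2) (hr1 : 1 ≤ r) (hr2 : r < 2)
    (δ σ : ℝ) (hδ : 0 < δ) (hσ : 0 < σ) :
    ∃ C : ℝ, 0 < C ∧
      ∀ (R s t : ℝ) (v : EuclideanSpace ℝ (Fin 3) → EuclideanSpace ℝ (Fin 3))
        (θ : EuclideanSpace ℝ (Fin 3) → ℝ),
        0 < R → 3 * R / 2 ≤ s → s < t → t ≤ 2 * R →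
        ContDiff ℝ (⊤ : ℕ∞) v → ContDiff ℝ (⊤ : ℕ∞) θ →
        (1 / (t - s)) * (∫ x in ball (0 : EuclideanSpace ℝ (Fin 3)) t \ ball 0 s,
            ‖v x‖ * |θ x|) ≤
          δ * lpS (fun x => ‖v x‖) 6 (ball 0 t \ ball 0 R) ^ 2
          + σ * lpS θ 6 (ball 0 t \ ball 0 R) ^ 2
          + C * (t - s) ^ (-((6 - q) * (6 - r) / (q * (6 - r) + r * (6 - q))))
            * lpS (fun x => ‖v x‖) q (ball 0 (2 * R) \ ball 0 R)
                ^ (2 * q * (6 - r) / (q * (6 - r) + r * (6 - q)))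
            * lpS θ r (ball 0 (2 * R) \ ball 0 R)
                ^ (2 * r * (6 - q) / (q * (6 - r) + r * (6 - q))) := by
  have h6 : 0 < 6 - q := by linarith
  have h6r : 0 < 6 - r := by linarith
  have hq0 : 0 < q := by linarith
  have hr0 : 0 < r := by linarith
  have ha : 0 < 2 * q / (6 - q) := by positivity
  have hb : 0 < 2 * r / (6 - r) := by positivity
  have ha1 : 2 * q / (6 - q) < 1 := by rw [div_lt_one h6]; linarith
  have hb1 : 2 * r / (6 - r) < 1 := by rw [div_lt_one h6r]; linarith
  have hD : 0 < q * (6 - r) + r * (6 - q) := by positivity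
  have x0 : 2 * q / (6 - q) + 2 * r / (6 - r) =
      2 * (q * (6 - r) + r * (6 - q)) / ((6 - q) * (6 - r)) := by
    field_simp
  have x1 : 2 / (2 * q / (6 - q) + 2 * r / (6 - r)) =
      (6 - q) * (6 - r) / (q * (6 - r) + r * (6 - q)) := by
    rw [x0]; field_simp
  have x2 : 2 * (2 * q / (6 - q)) / (2 * q / (6 - q) + 2 * r / (6 - r)) =
      2 * q * (6 - r) / (q * (6 - r) + r * (6 - q)) := by
    rw [x0]; field_simp
  have x3 : 2 * (2 * r / (6 - r)) / (2 * q / (6 - q) + 2 * r / (6 - r)) =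
      2 * r * (6 - q) / (q * (6 - r) + r * (6 - q)) := by
    rw [x0]; field_simp
  refine ⟨(δ ^ (-((1 - 2 * q / (6 - q)) / 2)) * σ ^ (-((1 - 2 * r / (6 - r)) / 2))) ^
    (2 / (2 * q / (6 - q) + 2 * r / (6 - r))), by positivity, ?_⟩
  intro R s t v θ hR hs hst ht hv hθ
  have hd : 0 < t - s := by linarith
  have cv : Continuous fun x => ‖v x‖ := hv.continuous.norm
  have cθ : Continuous θ := hθ.continuous
  have hmeas : ∀ a b : ℝ, MeasurableSet (ball (0 : EuclideanSpace ℝ (Fin 3)) a \ ball 0 b) :=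
    fun a b => measurableSet_ball.diff measurableSet_ball
  have hbd : ∀ a b : ℝ,
      Bornology.IsBounded (ball (0 : EuclideanSpace ℝ (Fin 3)) a \ ball 0 b) :=
    fun a b => isBounded_ball.subset Set.diff_subset
  have s1 : ball (0 : EuclideanSpace ℝ (Fin 3)) t \ ball 0 s ⊆ ball 0 (2 * R) \ ball 0 R :=
    Set.diff_subset_diff (ball_subset_ball ht) (ball_subset_ball (by linarith))
  have s2 : ball (0 : EuclideanSpace ℝ (Fin 3)) t \ ball 0 s ⊆ ball 0 t \ ball 0 R :=
    Set.diff_subset_diff le_rfl (ball_subset_ball (by linarith))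
  have I1 := J6_interp _ cv _ _ _ (hbd _ _) (hbd _ _) s1 s2 (hmeas _ _) (hmeas _ _)
    (hmeas _ _) q hq1 hq2
  have I2 := J6_interp _ cθ _ _ _ (hbd _ _) (hbd _ _) s1 s2 (hmeas _ _) (hmeas _ _)
    (hmeas _ _) r hr1 hr2
  have H := J6_holder (fun x => |‖v x‖| ^ (2 : ℝ)) (fun x => |θ x| ^ (2 : ℝ))
    (cv.abs.rpow_const fun x => Or.inr (by norm_num))
    (cθ.abs.rpow_const fun x => Or.inr (by norm_num))
    (fun x => Real.rpow_nonneg (abs_nonneg _) _)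
    (fun x => Real.rpow_nonneg (abs_nonneg _) _) _ (hbd t s) (hmeas t s) (1 / 2) (1 / 2)
    (by norm_num) (by norm_num) (by norm_num)
  have e : ∀ y : ℝ, (|y| ^ (2 : ℝ)) ^ (1 / 2 : ℝ) = |y| := fun y => by
    rw [← Real.rpow_mul (abs_nonneg _)]; norm_num
  simp only [e] at H
  simp only [abs_norm] at H
  simp only [abs_norm] at I1
  have Y := J6_young _ _ δ σ ha ha1 hb hb1 hδ hσ (t - s)
    (lpS (fun x => ‖v x‖) q (ball 0 (2 * R) \ ball 0 R))
    (lpS (fun x => ‖v x‖) 6 (ball 0 t \ ball 0 R))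
    (lpS θ r (ball 0 (2 * R) \ ball 0 R)) (lpS θ 6 (ball 0 t \ ball 0 R)) hd
    (J6_lpS_nonneg _ _ _) (J6_lpS_nonneg _ _ _) (J6_lpS_nonneg _ _ _) (J6_lpS_nonneg _ _ _)
  rw [x2, x3] at Y
  rw [x1] at Y ⊢
  refine le_trans (mul_le_mul_of_nonneg_left (H.trans (mul_le_mul I1 I2 ?_ ?_)) ?_) Y
  · exact Real.rpow_nonneg (integral_nonneg fun x => Real.rpow_nonneg (abs_nonneg _) _) _
  · exact mul_nonneg (Real.rpow_nonneg (J6_lpS_nonneg _ _ _) _)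
      (Real.rpow_nonneg (J6_lpS_nonneg _ _ _) _)
  · positivity
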